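/- Let (Ω,Σ,η) be a finite measure space and suppose {gₙ} ⊆ L¹(η) converges to 0 weakly in L¹(η). Then there exists a subsequence {g''ₙ} of {gₙ} such that, for every further subsequence {g'''ₙ} of {g''ₙ}, the arithmetic means (1/n)∑_{k=1}^n g'''ₖ(x) converge to 0 for η-almost every x ∈ Ω. -/

import Mathlib

open MeasureTheory Filter Topology
open scoped ENNReal

noncomputable section

namespace Paper

variable {Ω : Type*} [MeasurableSpace Ω]
variable {X : Type*} [NormedAddCommGroup X] [NormedSpace ℝ X]

/-- The signed measure `x* ∘ m` for a functional `x*` and vector measure `m`. -/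
def dualApply (m : VectorMeasure Ω X) (x : X →L[ℝ] ℝ) : SignedMeasure Ω :=
  m.mapRange x.toLinearMap.toAddMonoidHom x.continuous

/-- The semivariation `‖m‖(A)` of a vector measure. -/
def semivar (m : VectorMeasure Ω X) (A : Set Ω) : ℝ≥0∞ :=
  ⨆ x : {x : X →L[ℝ] ℝ // ‖x‖ ≤ 1}, (dualApply m x.1).totalVariation A

/-- `P` holds `‖m‖`-almost everywhere. -/
def MAE (m : VectorMeasure Ω X) (P : Ω → Prop) : Prop :=
  ∃ N : Set Ω, MeasurableSet N ∧ semivar m N = 0 ∧ ∀ ω ∉ N, P ω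

/-- The integral `∫_A f ds` of a real function with respect to a signed measure. -/
def sIntegral (s : SignedMeasure Ω) (f : Ω → ℝ) (A : Set Ω) : ℝ :=
  (∫ ω in A, f ω ∂s.toJordanDecomposition.posPart) -
    ∫ ω in A, f ω ∂s.toJordanDecomposition.negPart

/-- `f` is integrable with respect to the vector measure `m` (Bartle-Dunford-Schwartz). -/
def MIntegrable (m : VectorMeasure Ω X) (f : Ω → ℝ) : Prop :=
  Measurable f ∧
  (∀ x : X →L[ℝ] ℝ, Integrable f ((dualApply m x).totalVariation)) ∧
  (∀ A : Set Ω, MeasurableSet A →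
    ∃ v : X, ∀ x : X →L[ℝ] ℝ, x v = sIntegral (dualApply m x) f A)

open Classical in
/-- The vector integral `∫_A f dm ∈ X`. -/
def mIntegral (m : VectorMeasure Ω X) (f : Ω → ℝ) (A : Set Ω) : X :=
  if h : ∃ v : X, ∀ x : X →L[ℝ] ℝ, x v = sIntegral (dualApply m x) f A then h.choose
  else 0

/-- The norm of `L¹(m)`: `‖f‖ = sup_{‖x*‖ ≤ 1} ∫ |f| d|x*m|`. -/
def mNorm (m : VectorMeasure Ω X) (f : Ω → ℝ) : ℝ :=
  ⨆ x : {x : X →L[ℝ] ℝ // ‖x‖ ≤ 1}, ∫ ω, |f ω| ∂(dualApply m x.1).totalVariation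

/-- The vector measure `m` is separable: the pseudometric space `(Σ, d_m)`,
`d_m(A,B) = ‖m‖(A △ B)`, is separable. -/
def SeparableVM (m : VectorMeasure Ω X) : Prop :=
  ∃ D : Set (Set Ω), D.Countable ∧ (∀ B ∈ D, MeasurableSet B) ∧
    ∀ A : Set Ω, MeasurableSet A → ∀ ε : ℝ, 0 < ε →
      ∃ B ∈ D, semivar m (symmDiff A B) < ENNReal.ofReal ε

section FunctionSpace

variable {S : Type*} [MeasurableSpace S]

/-- `T` is a bounded linear functional on the function space determined by the
membership predicate `mem` and the norm `nrm`. -/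
def IsBddLinFunctional (mem : (S → ℝ) → Prop) (nrm : (S → ℝ) → ℝ)
    (T : (S → ℝ) → ℝ) : Prop :=
  (∀ f g, mem f → mem g → T (f + g) = T f + T g) ∧
  (∀ (c : ℝ) (f), mem f → T (c • f) = c * T f) ∧
  (∃ C : ℝ, ∀ f, mem f → |T f| ≤ C * nrm f)

/-- `f` is a weakly null sequence in the function space `(mem, nrm)`. -/
def WeaklyNullSeq (mem : (S → ℝ) → Prop) (nrm : (S → ℝ) → ℝ) (f : ℕ → S → ℝ) : Prop :=
  ∀ T : (S → ℝ) → ℝ, IsBddLinFunctional mem nrm T →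
    Tendsto (fun n => T (f n)) atTop (nhds 0)

/-- The set `K` has uniformly absolutely continuous norm in the function space with
norm `nrm` over the measure `μ`. -/
def UnifACNorm (μ : Measure S) (nrm : (S → ℝ) → ℝ) (K : Set (S → ℝ)) : Prop :=
  ∀ ε : ℝ, 0 < ε → ∃ δ : ℝ, 0 < δ ∧ ∀ A : Set S, MeasurableSet A →
    μ A < ENNReal.ofReal δ → ∀ f ∈ K, nrm (A.indicator f) ≤ ε

/-- The subsequence splitting property for the function space `(mem, nrm)` over `μ`. -/
def HasSSP (μ : Measure S) (mem : (S → ℝ) → Prop) (nrm : (S → ℝ) → ℝ) : Prop :=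
  ∀ f : ℕ → S → ℝ, (∀ n, mem (f n)) → (∃ C : ℝ, ∀ n, nrm (f n) ≤ C) →
    ∃ σ : ℕ → ℕ, StrictMono σ ∧
      ∃ g h : ℕ → S → ℝ,
        (∀ n, mem (g n)) ∧ (∀ n, mem (h n)) ∧
        (∀ n, f (σ n) = g n + h n) ∧
        (∀ n, (fun s => g n s * h n s) =ᵐ[μ] 0) ∧
        UnifACNorm μ nrm (Set.range g) ∧
        (∀ i j, i ≠ j → (fun s => h i s * h j s) =ᵐ[μ] 0)

/-- The weak Banach-Saks property for the function space `(mem, nrm)`. -/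
def HasWBS (mem : (S → ℝ) → Prop) (nrm : (S → ℝ) → ℝ) : Prop :=
  ∀ f : ℕ → S → ℝ, (∀ n, mem (f n)) → WeaklyNullSeq mem nrm f →
    ∃ σ : ℕ → ℕ, StrictMono σ ∧
      Tendsto (fun n : ℕ => nrm ((n : ℝ)⁻¹ • ∑ k ∈ Finset.range n, f (σ k))) atTop (nhds 0)

end FunctionSpace

/-- A Banach function space over `(S, μ)`: an (abstract) normed space `X` together with
a linear embedding `J` into measurable functions on `S`, separating points modulo
`μ`-null sets and satisfying the ideal property. -/
structure BFS (S : Type*) [MeasurableSpace S] (μ : Measure S)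
    (X : Type*) [NormedAddCommGroup X] [NormedSpace ℝ X] where
  J : X →ₗ[ℝ] (S → ℝ)
  aemeasurable : ∀ x : X, AEMeasurable (J x) μ
  eq_zero : ∀ x : X, J x =ᵐ[μ] 0 → x = 0
  ideal : ∀ (x : X) (g : S → ℝ), AEMeasurable g μ →
    (∀ᵐ s ∂μ, |g s| ≤ |J x s|) → ∃ y : X, J y =ᵐ[μ] g ∧ ‖y‖ ≤ ‖x‖

variable {S : Type*} [MeasurableSpace S] {μ : Measure S}

/-- The set `K ⊆ X` has uniformly absolutely continuous norm in the B.f.s. `X`. -/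
def BFS.UnifAC (B : BFS S μ X) (K : Set X) : Prop :=
  ∀ ε : ℝ, 0 < ε → ∃ δ : ℝ, 0 < δ ∧ ∀ A : Set S, MeasurableSet A →
    μ A < ENNReal.ofReal δ → ∀ x ∈ K, ∀ y : X, B.J y =ᵐ[μ] A.indicator (B.J x) → ‖y‖ ≤ ε

/-- The B.f.s. `X` has absolutely continuous norm. -/
def BFS.ACNorm (B : BFS S μ X) : Prop :=
  ∀ x : X, ∀ ε : ℝ, 0 < ε → ∃ δ : ℝ, 0 < δ ∧ ∀ A : Set S, MeasurableSet A →
    μ A < ENNReal.ofReal δ → ∀ y : X, B.J y =ᵐ[μ] A.indicator (B.J x) → ‖y‖ ≤ ε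

/-- The subsequence splitting property for the B.f.s. `X`. -/
def BFS.SSP (B : BFS S μ X) : Prop :=
  ∀ f : ℕ → X, (∃ C : ℝ, ∀ n, ‖f n‖ ≤ C) →
    ∃ σ : ℕ → ℕ, StrictMono σ ∧
      ∃ g h : ℕ → X,
        (∀ n, f (σ n) = g n + h n) ∧
        (∀ n, (fun s => B.J (g n) s * B.J (h n) s) =ᵐ[μ] 0) ∧
        B.UnifAC (Set.range g) ∧
        (∀ i j, i ≠ j → (fun s => B.J (h i) s * B.J (h j) s) =ᵐ[μ] 0)

/-- The weak Banach-Saks property for a normed space `Z`: every weakly null sequence has a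
subsequence whose arithmetic means converge to zero in norm. -/
def WeakBanachSaks (Z : Type*) [NormedAddCommGroup Z] [NormedSpace ℝ Z] : Prop :=
  ∀ z : ℕ → Z, (∀ φ : Z →L[ℝ] ℝ, Tendsto (fun n => φ (z n)) atTop (nhds 0)) →
    ∃ σ : ℕ → ℕ, StrictMono σ ∧
      Tendsto (fun n : ℕ => ‖(n : ℝ)⁻¹ • ∑ k ∈ Finset.range n, z (σ k)‖) atTop (nhds 0)

/-!
The core is the theorem of Komlós, proved like the Etemadi law of large numbers. Split each function
into positive and negative parts and truncate the `k`-th term of a nonnegative sequence at level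
`k + 1`. For a fixed level the truncations have a weak limit in `L²` along an ultrafilter, and these
limits increase with the level to an integrable function. A diagonal choice of subsequence makes the
centred truncations almost orthogonal, so their means along `⌊c ^ i⌋₊` are square summable and tend
to `0` almost everywhere. By monotonicity of the partial sums, convergence along `⌊c ^ i⌋₊` for `c`
close to `1` gives convergence of all means. All selected properties pass to further subsequences.

Weak nullity enters twice: by uniform boundedness it bounds the sequence in `L¹`, and since the
means are again weakly null, it forces their almost everywhere limit to vanish.
-/

section Selection

lemma exists_seq_forall_of_eventually {α : Type*} {l : Filter α} [l.NeBot]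
    {p : ℕ → α → Prop} {r : ℕ → ℕ → α → α → Prop}
    (hp : ∀ n, ∀ᶠ v in l, p n v) (hr : ∀ m n u, ∀ᶠ v in l, r m n u v) :
    ∃ s : ℕ → α, (∀ n, p n (s n)) ∧ ∀ m n, m < n → r m n (s m) (s n) := by
  have exists_next : ∀ (n : ℕ) (prev : Set.Iio n → α), ∃ v, p n v ∧
      ∀ m : Set.Iio n, r m n (prev m) v := fun n prev =>
    ((hp n).and (eventually_all.2 fun m : Set.Iio n => hr m n (prev m))).exists
  choose next next_p next_r using exists_next
  let s : ℕ → α := Nat.lt_wfRel.wf.fix fun n prev => next n fun m => prev m m.2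
  have s_eq : ∀ n, s n = next n fun m => s m := fun n => Nat.lt_wfRel.wf.fix_eq _ n
  refine ⟨s, fun n => ?_, fun m n hmn => ?_⟩
  · rw [s_eq]
    exact next_p _ _
  · rw [s_eq n]
    exact next_r n (fun k => s k) ⟨m, hmn⟩

lemma exists_tendsto_of_forall_mem_Icc {ι : Type*} (U : Ultrafilter ι) {a : ι → ℝ} {b c : ℝ}
    (ha : ∀ i, a i ∈ Set.Icc b c) : ∃ q, Tendsto a U (𝓝 q) := by
  obtain ⟨q, -, hq⟩ := (isCompact_Icc (a := b) (b := c)).ultrafilter_le_nhds' (U.map a)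
    (Ultrafilter.mem_map.2 (univ_mem' ha))
  exact ⟨q, hq⟩

lemma exists_summable_tendsto_of_sum_range_le {ι : Type*} (U : Ultrafilter ι) {a : ℕ → ι → ℝ}
    {C : ℝ} (ha : ∀ j i, 0 ≤ a j i) (hC : ∀ i J, ∑ j ∈ Finset.range J, a j i ≤ C) :
    ∃ q : ℕ → ℝ, Summable q ∧ ∀ j, Tendsto (a j) U (𝓝 (q j)) := by
  have le_C : ∀ j i, a j i ≤ C := fun j i =>
    (Finset.single_le_sum (fun j _ => ha j i) (Finset.self_mem_range_succ j)).trans (hC i (j + 1))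
  choose q hq using fun j => exists_tendsto_of_forall_mem_Icc U fun i => ⟨ha j i, le_C j i⟩
  exact ⟨q, summable_of_sum_range_le (fun j => ge_of_tendsto' (hq j) (ha j)) fun J =>
    le_of_tendsto' (tendsto_finsetSum (Finset.range J) fun j _ => hq j) fun i => hC i J, hq⟩

end Selection

section Hilbert

variable {H : Type*} [NormedAddCommGroup H] [InnerProductSpace ℝ H]

/-- Weak convergence of `x` to `h` along the filter `l` in a real inner product space, tested
against the functionals `⟪z, ·⟫`. In a Hilbert space these are all the continuous functionals. -/
def TendstoWeakly {ι : Type*} (x : ι → H) (l : Filter ι) (h : H) : Prop :=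
  ∀ z : H, Tendsto (fun i => inner ℝ z (x i)) l (𝓝 (inner ℝ z h))

lemma exists_tendstoWeakly_of_norm_le [CompleteSpace H] {ι : Type*} (U : Ultrafilter ι)
    {x : ι → H} {B : ℝ} (hB : ∀ i, ‖x i‖ ≤ B) : ∃ h, TendstoWeakly x U h := by
  let T : ι → WeakDual ℝ H := fun i => StrongDual.toWeakDual (InnerProductSpace.toDual ℝ H (x i))
  have T_mem : ∀ i, T i ∈ WeakDual.toStrongDual ⁻¹' Metric.closedBall 0 B := fun i => by
    simpa [T] using hB i
  obtain ⟨t, -, ht⟩ := (WeakDual.isCompact_closedBall (𝕜 := ℝ) (E := H) 0 B).ultrafilter_le_nhds'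
    (U.map T) (Ultrafilter.mem_map.2 (univ_mem' T_mem))
  refine ⟨(InnerProductSpace.toDual ℝ H).symm (WeakDual.toStrongDual t), fun z => ?_⟩
  rw [real_inner_comm, InnerProductSpace.toDual_symm_apply]
  exact (((WeakDual.eval_continuous z).tendsto t).comp ht).congr fun i => real_inner_comm z (x i)

lemma TendstoWeakly.eventually_abs_inner_sub_lt {ι : Type*} {l : Filter ι} {x : ι → H} {h : H}
    (hx : TendstoWeakly x l h) (z : H) {ε : ℝ} (hε : 0 < ε) :
    ∀ᶠ i in l, |inner ℝ z (x i - h)| < ε := by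
  simpa only [inner_sub_right, Real.dist_eq] using Metric.tendsto_nhds.1 (hx z) ε hε

lemma TendstoWeakly.norm_sq_le {ι : Type*} {l : Filter ι} [l.NeBot] {x : ι → H} {h : H} {Q : ℝ}
    (hx : TendstoWeakly x l h) (hQ : Tendsto (fun i => ‖x i‖ ^ 2) l (𝓝 Q)) : ‖h‖ ^ 2 ≤ Q := by
  have two_inner_le : ∀ i, 2 * inner ℝ h (x i) ≤ ‖h‖ ^ 2 + ‖x i‖ ^ 2 := fun i => by
    linarith [norm_sub_sq_real h (x i), sq_nonneg ‖h - x i‖]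
  have := le_of_tendsto_of_tendsto' ((hx h).const_mul 2) (hQ.const_add (‖h‖ ^ 2)) two_inner_le
  rw [real_inner_self_eq_norm_sq] at this
  linarith

/-- The `k`-th vector has inner products at most `1 / (k + 1)` with its `k` predecessors, so that
the off-diagonal part of `‖∑ k < N, y k‖²` is at most `2 * N`. -/
def AlmostOrthogonal (y : ℕ → H) : Prop :=
  ∀ i k, i < k → |inner ℝ (y i) (y k)| ≤ 1 / ((k : ℝ) + 1)

lemma AlmostOrthogonal.norm_sum_range_sq_le {y : ℕ → H} (hy : AlmostOrthogonal y) (N : ℕ) :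
    ‖∑ k ∈ Finset.range N, y k‖ ^ 2 ≤ ∑ k ∈ Finset.range N, (‖y k‖ ^ 2 + 2) := by
  induction N with
  | zero => simp
  | succ N ih =>
    have cross_le : inner ℝ (∑ i ∈ Finset.range N, y i) (y N) ≤ 1 := by
      calc inner ℝ (∑ i ∈ Finset.range N, y i) (y N)
          = ∑ i ∈ Finset.range N, inner ℝ (y i) (y N) := sum_inner ..
        _ ≤ ∑ i ∈ Finset.range N, 1 / ((N : ℝ) + 1) := Finset.sum_le_sum fun i hi =>
            (le_abs_self _).trans (hy i N (Finset.mem_range.1 hi))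
        _ = N / ((N : ℝ) + 1) := by simp [div_eq_mul_inv]
        _ ≤ 1 := (div_le_one (by positivity)).2 (by linarith)
    rw [Finset.sum_range_succ, Finset.sum_range_succ, norm_add_sq_real]
    linarith

lemma sum_inv_floor_pow_sq_le {c : ℝ} (hc : 1 < c) (I k : ℕ) :
    ∑ i ∈ Finset.range I with k < ⌊c ^ i⌋₊, 1 / (⌊c ^ i⌋₊ : ℝ) ^ 2 ≤
      4 * (c ^ 5 * (c - 1)⁻¹ ^ 3) / ((k : ℝ) + 1) ^ 2 := by
  calc ∑ i ∈ Finset.range I with k < ⌊c ^ i⌋₊, 1 / (⌊c ^ i⌋₊ : ℝ) ^ 2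
      ≤ ∑ i ∈ Finset.range I with ((k : ℝ) + 1) / 2 < ⌊c ^ i⌋₊, 1 / (⌊c ^ i⌋₊ : ℝ) ^ 2 := by
        gcongr with i
        intro hk
        have : (k : ℝ) + 1 ≤ ⌊c ^ i⌋₊ := by exact_mod_cast hk
        linarith [(k.cast_nonneg : (0 : ℝ) ≤ k)]
    _ ≤ c ^ 5 * (c - 1)⁻¹ ^ 3 / (((k : ℝ) + 1) / 2) ^ 2 :=
        sum_div_nat_floor_pow_sq_le_div_sq I (by positivity) hc
    _ = 4 * (c ^ 5 * (c - 1)⁻¹ ^ 3) / ((k : ℝ) + 1) ^ 2 := by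
        field_simp
        ring

lemma summable_sum_range_floor_pow_div_sq {a : ℕ → ℝ} (ha : ∀ k, 0 ≤ a k)
    (hs : Summable fun k : ℕ => a k / ((k : ℝ) + 1) ^ 2) {c : ℝ} (hc : 1 < c) :
    Summable fun i : ℕ => (∑ k ∈ Finset.range ⌊c ^ i⌋₊, a k) / (⌊c ^ i⌋₊ : ℝ) ^ 2 := by
  set D := 4 * (c ^ 5 * (c - 1)⁻¹ ^ 3)
  have D_nonneg : 0 ≤ D := by
    have : 0 < c - 1 := sub_pos.2 hc
    positivity
  refine summable_of_sum_range_le (c := D * ∑' k : ℕ, a k / ((k : ℝ) + 1) ^ 2)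
    (fun i => div_nonneg (Finset.sum_nonneg fun k _ => ha k) (sq_nonneg _)) fun I => ?_
  have floor_mono : ∀ i < I, ⌊c ^ i⌋₊ ≤ ⌊c ^ I⌋₊ := fun i hi =>
    Nat.floor_mono (pow_le_pow_right₀ hc.le hi.le)
  calc ∑ i ∈ Finset.range I, (∑ k ∈ Finset.range ⌊c ^ i⌋₊, a k) / (⌊c ^ i⌋₊ : ℝ) ^ 2
      = ∑ i ∈ Finset.range I, ∑ k ∈ Finset.range ⌊c ^ i⌋₊, a k * (1 / (⌊c ^ i⌋₊ : ℝ) ^ 2) := by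
        simp only [Finset.sum_div, mul_one_div]
    _ = ∑ k ∈ Finset.range ⌊c ^ I⌋₊, ∑ i ∈ Finset.range I with k < ⌊c ^ i⌋₊,
          a k * (1 / (⌊c ^ i⌋₊ : ℝ) ^ 2) := by
        refine Finset.sum_comm' fun i k => ?_
        simp only [Finset.mem_range, Finset.mem_filter]
        exact ⟨fun h => ⟨h, h.2.trans_le (floor_mono i h.1)⟩, fun h => h.1⟩
    _ ≤ ∑ k ∈ Finset.range ⌊c ^ I⌋₊, a k * (D / ((k : ℝ) + 1) ^ 2) := by
        simp only [← Finset.mul_sum]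
        exact Finset.sum_le_sum fun k _ =>
          mul_le_mul_of_nonneg_left (sum_inv_floor_pow_sq_le hc I k) (ha k)
    _ = D * ∑ k ∈ Finset.range ⌊c ^ I⌋₊, a k / ((k : ℝ) + 1) ^ 2 := by
        rw [Finset.mul_sum]
        exact Finset.sum_congr rfl fun k _ => by ring
    _ ≤ D * ∑' k : ℕ, a k / ((k : ℝ) + 1) ^ 2 :=
        mul_le_mul_of_nonneg_left
          (hs.sum_le_tsum _ fun k _ => div_nonneg (ha k) (sq_nonneg _)) D_nonneg

lemma AlmostOrthogonal.summable_norm_sq_mean_floor_pow {y : ℕ → H} (hy : AlmostOrthogonal y)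
    (hs : Summable fun k : ℕ => ‖y k‖ ^ 2 / ((k : ℝ) + 1) ^ 2) {c : ℝ} (hc : 1 < c) :
    Summable fun i : ℕ => ‖(⌊c ^ i⌋₊ : ℝ)⁻¹ • ∑ k ∈ Finset.range ⌊c ^ i⌋₊, y k‖ ^ 2 := by
  have summable_inv_sq : Summable fun k : ℕ => 1 / ((k : ℝ) + 1) ^ 2 := by
    simpa using (summable_nat_add_iff 1).2 (Real.summable_one_div_nat_pow.2 one_lt_two)
  have hs' : Summable fun k : ℕ => (‖y k‖ ^ 2 + 2) / ((k : ℝ) + 1) ^ 2 :=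
    (hs.add (summable_inv_sq.mul_left 2)).congr fun k => by ring
  refine (summable_sum_range_floor_pow_div_sq (fun k => by positivity) hs' hc).of_nonneg_of_le
    (fun i => sq_nonneg _) fun i => ?_
  rw [norm_smul, mul_pow, norm_inv, inv_pow, Real.norm_natCast, ← div_eq_inv_mul]
  gcongr
  exact hy.norm_sum_range_sq_le _

lemma exists_strictMono_abs_inner_sub_le {l : Filter ℕ} [l.NeBot] (hl : l ≤ atTop)
    {x : ℕ → ℕ → H} {h : ℕ → H} (hx : ∀ j, TendstoWeakly (x j) l (h j)) {p : ℕ → ℕ → Prop}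
    (hp : ∀ n, ∀ᶠ v in l, p n v) :
    ∃ σ : ℕ → ℕ, StrictMono σ ∧ (∀ n, p n (σ n)) ∧
      ∀ m n, m < n → ∀ i ≤ m, ∀ j ≤ n,
        |inner ℝ (x i (σ m) - h i) (x j (σ n) - h j)| ≤ 1 / ((n : ℝ) + 1) := by
  have eventually_inner_le : ∀ m n u, ∀ᶠ v in l, ∀ i ≤ m, ∀ j ≤ n,
      |inner ℝ (x i u - h i) (x j v - h j)| ≤ 1 / ((n : ℝ) + 1) := fun m n u =>
    (eventually_all_finite (Set.finite_Iic m)).2 fun i _ =>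
      (eventually_all_finite (Set.finite_Iic n)).2 fun j _ =>
        ((hx j).eventually_abs_inner_sub_lt _ (by positivity)).mono fun _ => le_of_lt
  obtain ⟨σ, σ_p, σ_rel⟩ := exists_seq_forall_of_eventually hp fun m n u =>
    ((eventually_gt_atTop u).filter_mono hl).and (eventually_inner_le m n u)
  exact ⟨σ, fun m n hmn => (σ_rel m n hmn).1, σ_p, fun m n hmn => (σ_rel m n hmn).2⟩

theorem exists_strictMono_forall_diagonal_almostOrthogonal {U : Ultrafilter ℕ}
    (hU : (U : Filter ℕ) ≤ atTop) {x : ℕ → ℕ → H} {h : ℕ → H} {C : ℝ}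
    (hC : ∀ n J, ∑ j ∈ Finset.range J, ‖x j n‖ ^ 2 / ((j : ℝ) + 1) ^ 2 ≤ C)
    (hx : ∀ j, TendstoWeakly (x j) U (h j)) :
    ∃ σ : ℕ → ℕ, StrictMono σ ∧ ∀ τ : ℕ → ℕ, StrictMono τ →
      Summable (fun k => ‖x k (σ (τ k))‖ ^ 2 / ((k : ℝ) + 1) ^ 2) ∧
      Summable (fun k => ‖x k (σ (τ k)) - h k‖ ^ 2 / ((k : ℝ) + 1) ^ 2) ∧
      AlmostOrthogonal fun k => x k (σ (τ k)) - h k := by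
  obtain ⟨q, q_summable, hq⟩ := exists_summable_tendsto_of_sum_range_le U
    (fun j n => by positivity) hC
  have h_le : ∀ j, ‖h j‖ ^ 2 / ((j : ℝ) + 1) ^ 2 ≤ q j := fun j => by
    rw [div_le_iff₀ (by positivity)]
    refine (hx j).norm_sq_le (((hq j).mul_const (((j : ℝ) + 1) ^ 2)).congr fun n => ?_)
    exact div_mul_cancel₀ _ (by positivity)
  have eventually_le : ∀ n : ℕ, ∀ᶠ v in (U : Filter ℕ), ∀ j ≤ n,
      ‖x j v‖ ^ 2 / ((j : ℝ) + 1) ^ 2 ≤ q j + (1 / 2) ^ n := fun n =>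
    (eventually_all_finite (Set.finite_Iic n)).2 fun j _ =>
      (hq j).eventually_le_const (lt_add_of_pos_right _ (by positivity))
  obtain ⟨σ, σ_mono, σ_norm_le, σ_inner_le⟩ :=
    exists_strictMono_abs_inner_sub_le hU hx eventually_le
  refine ⟨σ, σ_mono, fun τ hτ => ?_⟩
  -- Stage `n` of `σ` controls every level `j ≤ n`, and level `k` is only used at stage `τ k ≥ k`.
  have le_τ : ∀ k, k ≤ τ k := fun k => hτ.le_apply
  have w_summable : Summable fun k => ‖x k (σ (τ k))‖ ^ 2 / ((k : ℝ) + 1) ^ 2 := by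
    refine (q_summable.add summable_geometric_two).of_nonneg_of_le (fun k => by positivity)
      fun k => (σ_norm_le (τ k) k (le_τ k)).trans ?_
    gcongr q k + ?_
    exact pow_le_pow_of_le_one (by norm_num) (by norm_num) (le_τ k)
  refine ⟨w_summable, ?_, fun i k hik => ?_⟩
  · refine ((w_summable.add q_summable).mul_left 2).of_nonneg_of_le (fun k => by positivity)
      fun k => ?_
    calc ‖x k (σ (τ k)) - h k‖ ^ 2 / ((k : ℝ) + 1) ^ 2
        ≤ 2 * (‖x k (σ (τ k))‖ ^ 2 + ‖h k‖ ^ 2) / ((k : ℝ) + 1) ^ 2 := by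
          gcongr
          nlinarith [parallelogram_law_with_norm ℝ (x k (σ (τ k))) (h k),
            sq_nonneg ‖x k (σ (τ k)) + h k‖]
      _ = 2 * (‖x k (σ (τ k))‖ ^ 2 / ((k : ℝ) + 1) ^ 2 + ‖h k‖ ^ 2 / ((k : ℝ) + 1) ^ 2) := by ring
      _ ≤ 2 * (‖x k (σ (τ k))‖ ^ 2 / ((k : ℝ) + 1) ^ 2 + q k) := by gcongr; exact h_le k
  · refine (σ_inner_le (τ i) (τ k) (hτ hik) i (le_τ i) k (le_τ k)).trans ?_
    gcongr
    exact le_τ k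

end Hilbert

section SquareIntegrable

variable {η : Measure Ω}

lemma lintegral_enorm_sq_eq_norm_sq (z : Lp ℝ 2 η) :
    ∫⁻ ω, ‖z ω‖ₑ ^ 2 ∂η = ENNReal.ofReal (‖z‖ ^ 2) := by
  have eLpNorm_sq := eLpNorm_nnreal_pow_eq_lintegral (f := z) (μ := η) (p := 2) two_ne_zero
  rw [ENNReal.ofReal_pow (norm_nonneg z), Lp.norm_def, ENNReal.ofReal_toReal (Lp.eLpNorm_ne_top z)]
  simpa using eLpNorm_sq.symm

lemma ae_tendsto_zero_of_summable_norm_sq {z : ℕ → Lp ℝ 2 η} (hz : Summable fun i => ‖z i‖ ^ 2) :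
    ∀ᵐ ω ∂η, Tendsto (fun i => z i ω) atTop (𝓝 0) := by
  have sq_aemeasurable : ∀ i, AEMeasurable (fun ω => ‖z i ω‖ₑ ^ 2) η := fun i =>
    (Lp.aestronglyMeasurable (z i)).enorm.pow_const 2
  have lintegral_tsum_ne_top : ∫⁻ ω, ∑' i, ‖z i ω‖ₑ ^ 2 ∂η ≠ ∞ := by
    simp only [lintegral_tsum sq_aemeasurable, lintegral_enorm_sq_eq_norm_sq]
    exact hz.tsum_ofReal_ne_top
  filter_upwards [ae_lt_top' (AEMeasurable.tsum sq_aemeasurable) lintegral_tsum_ne_top] with ω hω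
  have sq_tendsto : Tendsto (fun i => ‖z i ω‖ₑ ^ 2) atTop (𝓝 0) :=
    ENNReal.tendsto_atTop_zero_of_tsum_ne_top hω.ne
  have abs_tendsto := ((ENNReal.tendsto_toReal ENNReal.zero_ne_top).comp sq_tendsto).sqrt
  refine (tendsto_zero_iff_abs_tendsto_zero _).2 ?_
  simpa [Function.comp_def, Real.sqrt_sq_eq_abs] using abs_tendsto

lemma AlmostOrthogonal.ae_tendsto_mean_floor_pow {y : ℕ → Lp ℝ 2 η} (hy : AlmostOrthogonal y)
    (hs : Summable fun k : ℕ => ‖y k‖ ^ 2 / ((k : ℝ) + 1) ^ 2) {c : ℝ} (hc : 1 < c) :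
    ∀ᵐ ω ∂η, Tendsto (fun i : ℕ => (⌊c ^ i⌋₊ : ℝ)⁻¹ * ∑ k ∈ Finset.range ⌊c ^ i⌋₊, y k ω)
      atTop (𝓝 0) := by
  filter_upwards [ae_tendsto_zero_of_summable_norm_sq (hy.summable_norm_sq_mean_floor_pow hs hc),
    ae_all_iff.2 fun i : ℕ => Lp.coeFn_smul (⌊c ^ i⌋₊ : ℝ)⁻¹ (∑ k ∈ Finset.range ⌊c ^ i⌋₊, y k),
    ae_all_iff.2 fun i : ℕ => Lp.coeFn_finsetSum (Finset.range ⌊c ^ i⌋₊) y]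
    with ω mean_tendsto coe_smul coe_sum
  refine mean_tendsto.congr fun i => ?_
  rw [coe_smul, Pi.smul_apply, coe_sum, Finset.sum_apply, smul_eq_mul]

lemma TendstoWeakly.tendsto_setIntegral {ι : Type*} {l : Filter ι} {x : ι → Lp ℝ 2 η}
    {h : Lp ℝ 2 η} (hx : TendstoWeakly x l h) {A : Set Ω} (hA : MeasurableSet A)
    (hηA : η A ≠ ∞) :
    Tendsto (fun i => ∫ ω in A, x i ω ∂η) l (𝓝 (∫ ω in A, h ω ∂η)) := by
  simpa only [L2.inner_indicatorConstLp_one] using hx (indicatorConstLp 2 hA hηA 1)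

lemma ae_exists_tendsto_of_monotone_of_integral_le {f : ℕ → Ω → ℝ}
    (hf : ∀ n, Integrable (f n) η) (hmono : ∀ᵐ ω ∂η, Monotone fun n => f n ω) {C : ℝ}
    (hC : ∀ n, ∫ ω, f n ω ∂η ≤ C) :
    ∀ᵐ ω ∂η, ∃ L, Tendsto (fun n => f n ω) atTop (𝓝 L) := by
  let d : ℕ → Ω → ℝ≥0∞ := fun n ω => ENNReal.ofReal (f n ω - f 0 ω)
  have d_aemeasurable : ∀ n, AEMeasurable (d n) η := fun n =>
    ((hf n).sub (hf 0)).aemeasurable.ennreal_ofReal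
  have d_mono : ∀ᵐ ω ∂η, Monotone fun n => d n ω := hmono.mono fun ω h i j hij =>
    ENNReal.ofReal_le_ofReal (sub_le_sub_right (h hij) _)
  have lintegral_d_le : ∀ n, ∫⁻ ω, d n ω ∂η ≤ ENNReal.ofReal (C - ∫ ω, f 0 ω ∂η) := fun n => by
    calc ∫⁻ ω, d n ω ∂η = ENNReal.ofReal (∫ ω, f n ω - f 0 ω ∂η) :=
          (ofReal_integral_eq_lintegral_ofReal ((hf n).sub (hf 0))
            (hmono.mono fun ω h => sub_nonneg.2 (h n.zero_le))).symm
      _ ≤ ENNReal.ofReal (C - ∫ ω, f 0 ω ∂η) := by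
          rw [integral_sub (hf n) (hf 0)]
          exact ENNReal.ofReal_le_ofReal (sub_le_sub_right (hC n) _)
  have lintegral_iSup_ne_top : ∫⁻ ω, ⨆ n, d n ω ∂η ≠ ∞ := by
    rw [lintegral_iSup' d_aemeasurable d_mono]
    exact ne_top_of_le_ne_top ENNReal.ofReal_ne_top (iSup_le lintegral_d_le)
  filter_upwards [hmono, ae_lt_top' (AEMeasurable.iSup d_aemeasurable) lintegral_iSup_ne_top]
    with ω h_mono iSup_lt_top
  refine ⟨_, tendsto_atTop_ciSup h_mono ⟨(⨆ n, d n ω).toReal + f 0 ω, ?_⟩⟩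
  rintro _ ⟨n, rfl⟩
  exact sub_le_iff_le_add.1 ((ENNReal.ofReal_le_iff_le_toReal iSup_lt_top.ne).1
    (le_iSup (fun n => d n ω) n))

variable [IsFiniteMeasure η]

lemma TendstoWeakly.le_of_forall_le {ι : Type*} {l : Filter ι} [l.NeBot] {x y : ι → Lp ℝ 2 η}
    {a b : Lp ℝ 2 η} (hx : TendstoWeakly x l a) (hy : TendstoWeakly y l b)
    (hxy : ∀ i, x i ≤ y i) : a ≤ b := by
  have integrable : ∀ z : Lp ℝ 2 η, Integrable z η := fun z =>
    (Lp.memLp z).integrable one_le_two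
  refine (Lp.coeFn_le a b).1 <| ae_le_of_forall_setIntegral_le (integrable a) (integrable b)
    fun A hA hηA => le_of_tendsto_of_tendsto' (hx.tendsto_setIntegral hA hηA.ne)
      (hy.tendsto_setIntegral hA hηA.ne) fun i => ?_
  exact setIntegral_mono_ae (integrable (x i)).integrableOn (integrable (y i)).integrableOn
    ((Lp.coeFn_le _ _).2 (hxy i))

lemma TendstoWeakly.ae_exists_tendsto_of_monotone {ι : Type*} {l : Filter ι} [l.NeBot]
    {x : ℕ → ι → Lp ℝ 2 η} {h : ℕ → Lp ℝ 2 η} (hx : ∀ j, TendstoWeakly (x j) l (h j))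
    (hmono : ∀ i, Monotone fun j => x j i) {C : ℝ} (hC : ∀ j i, ∫ ω, x j i ω ∂η ≤ C) :
    ∀ᵐ ω ∂η, ∃ L, Tendsto (fun j => h j ω) atTop (𝓝 L) := by
  have h_le_succ : ∀ j, h j ≤ᵐ[η] h (j + 1) := fun j =>
    (Lp.coeFn_le _ _).2 ((hx j).le_of_forall_le (hx (j + 1)) fun i => hmono i j.le_succ)
  refine ae_exists_tendsto_of_monotone_of_integral_le (C := C)
    (fun j => (Lp.memLp (h j)).integrable one_le_two)
    ((ae_all_iff.2 h_le_succ).mono fun ω => monotone_nat_of_le_succ) fun j => ?_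
  have := (hx j).tendsto_setIntegral MeasurableSet.univ (measure_ne_top η Set.univ)
  simp only [Measure.restrict_univ] at this
  exact le_of_tendsto' this (hC j)

end SquareIntegrable

section Truncation

/-- The truncation of `f` from above at the level `j + 1`. The shift keeps the level positive when
the `k`-th term of a sequence indexed from `0` is truncated at index `k`. -/
def truncAt {α : Type*} (f : α → ℝ) (j : ℕ) : α → ℝ := fun a => min (f a) (j + 1)

lemma truncAt_le_self {α : Type*} (f : α → ℝ) (j : ℕ) : truncAt f j ≤ f := fun _ => min_le_left _ _

lemma truncAt_nonneg {α : Type*} {f : α → ℝ} (h0 : 0 ≤ f) (j : ℕ) : 0 ≤ truncAt f j := fun a =>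
  le_min (h0 a) (by positivity)

lemma norm_truncAt_le {α : Type*} {f : α → ℝ} (h0 : 0 ≤ f) (j : ℕ) (a : α) :
    ‖truncAt f j a‖ ≤ j + 1 :=
  (Real.norm_of_nonneg (truncAt_nonneg h0 j a)).trans_le (min_le_right _ _)

lemma truncAt_mono {α : Type*} (f : α → ℝ) : Monotone (truncAt f) := fun _ _ hij _ =>
  min_le_min_left _ (by gcongr)

lemma sum_range_min_sq_div_sq_le {t : ℝ} (ht : 0 ≤ t) (J : ℕ) :
    ∑ j ∈ Finset.range J, min t ((j : ℝ) + 1) ^ 2 / ((j : ℝ) + 1) ^ 2 ≤ 3 * t := by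
  have split_term : ∀ j : ℕ, min t ((j : ℝ) + 1) ^ 2 / ((j : ℝ) + 1) ^ 2 ≤
      if j < ⌊t⌋₊ then 1 else t ^ 2 * (((j + 1 : ℕ) : ℝ) ^ 2)⁻¹ := fun j => by
    have : 0 ≤ min t ((j : ℝ) + 1) := le_min ht (by positivity)
    split_ifs with hj
    · exact div_le_one_of_le₀ (by gcongr; exact min_le_right _ _) (by positivity)
    · rw [div_eq_mul_inv]
      push_cast
      gcongr
      exact min_le_left _ _
  have head_le : ∑ j ∈ Finset.range J with j < ⌊t⌋₊, (1 : ℝ) ≤ t := by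
    have : (Finset.range J).filter (· < ⌊t⌋₊) ⊆ Finset.range ⌊t⌋₊ := fun j hj =>
      Finset.mem_range.2 (Finset.mem_filter.1 hj).2
    simpa using (Nat.cast_le.2 (Finset.card_le_card this)).trans
      ((congrArg Nat.cast (Finset.card_range _)).trans_le (Nat.floor_le ht))
  have tail_le : ∑ j ∈ Finset.range J with ¬ j < ⌊t⌋₊, t ^ 2 * (((j + 1 : ℕ) : ℝ) ^ 2)⁻¹ ≤
      2 * t := by
    calc ∑ j ∈ Finset.range J with ¬ j < ⌊t⌋₊, t ^ 2 * (((j + 1 : ℕ) : ℝ) ^ 2)⁻¹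
        = t ^ 2 * ∑ i ∈ Finset.Ioo ⌊t⌋₊ (J + 1), ((i : ℝ) ^ 2)⁻¹ := by
          rw [← Finset.mul_sum]
          congr 1
          refine Finset.sum_nbij' (· + 1) (· - 1) ?_ ?_ ?_ ?_ ?_ <;> simp <;> omega
      _ ≤ t ^ 2 * (2 / ((⌊t⌋₊ : ℝ) + 1)) := by gcongr; exact sum_Ioo_inv_sq_le _ _
      _ ≤ 2 * t := by
          rw [mul_div_assoc', div_le_iff₀ (by positivity)]
          nlinarith [Nat.lt_floor_add_one t]
  calc ∑ j ∈ Finset.range J, min t ((j : ℝ) + 1) ^ 2 / ((j : ℝ) + 1) ^ 2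
      ≤ ∑ j ∈ Finset.range J, if j < ⌊t⌋₊ then 1 else t ^ 2 * (((j + 1 : ℕ) : ℝ) ^ 2)⁻¹ :=
        Finset.sum_le_sum fun j _ => split_term j
    _ ≤ t + 2 * t := by rw [Finset.sum_ite]; exact add_le_add head_le tail_le
    _ = 3 * t := by ring

variable {η : Measure Ω}

lemma memLp_truncAt [IsFiniteMeasure η] {f : Ω → ℝ} (hf : AEStronglyMeasurable f η) (h0 : 0 ≤ f)
    (j : ℕ) (p : ℝ≥0∞) : MemLp (truncAt f j) p η :=
  MemLp.of_bound (hf.inf aestronglyMeasurable_const) _ (ae_of_all _ (norm_truncAt_le h0 j))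

lemma norm_toLp_sq_eq_integral {f : Ω → ℝ} (hf : MemLp f 2 η) :
    ‖hf.toLp f‖ ^ 2 = ∫ ω, f ω ^ 2 ∂η := by
  rw [← real_inner_self_eq_norm_sq, L2.inner_def]
  refine integral_congr_ae (hf.coeFn_toLp.mono fun ω hω => ?_)
  simp [hω, sq]

lemma sum_range_norm_truncAt_sq_div_sq_le [IsFiniteMeasure η] {f : Ω → ℝ} (hf : Integrable f η)
    (h0 : 0 ≤ f) (J : ℕ) :
    ∑ j ∈ Finset.range J, ‖(memLp_truncAt hf.1 h0 j 2).toLp (truncAt f j)‖ ^ 2 / ((j : ℝ) + 1) ^ 2 ≤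
      3 * ∫ ω, f ω ∂η := by
  have sq_integrable : ∀ j ∈ Finset.range J,
      Integrable (fun ω => truncAt f j ω ^ 2 / ((j : ℝ) + 1) ^ 2) η := fun j _ =>
    (memLp_truncAt hf.1 h0 j 2).integrable_sq.div_const _
  simp only [norm_toLp_sq_eq_integral, ← integral_div, ← integral_const_mul]
  rw [← integral_finsetSum _ sq_integrable]
  exact integral_mono (integrable_finsetSum _ sq_integrable) (hf.const_mul 3) fun ω =>
    sum_range_min_sq_div_sq_le (h0 ω) J

lemma ae_eventually_truncAt_eq {F : ℕ → Ω → ℝ} {w : ℕ → Lp ℝ 2 η}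
    (hw : ∀ k, w k =ᵐ[η] truncAt (F k) k)
    (hs : Summable fun k : ℕ => ‖w k‖ ^ 2 / ((k : ℝ) + 1) ^ 2) :
    ∀ᵐ ω ∂η, ∀ᶠ k in atTop, truncAt (F k) k ω = F k ω := by
  have scaled_summable : Summable fun k : ℕ => ‖((k : ℝ) + 1)⁻¹ • w k‖ ^ 2 :=
    hs.congr fun k => by
      rw [norm_smul, mul_pow, Real.norm_of_nonneg (by positivity), inv_pow, div_eq_inv_mul]
  filter_upwards [ae_tendsto_zero_of_summable_norm_sq scaled_summable, ae_all_iff.2 hw,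
    ae_all_iff.2 fun k : ℕ => Lp.coeFn_smul ((k : ℝ) + 1)⁻¹ (w k)] with ω tendsto_zero w_eq coe_smul
  filter_upwards [tendsto_zero.eventually_lt_const one_pos] with k hk
  rw [coe_smul, Pi.smul_apply, w_eq, smul_eq_mul, inv_mul_lt_iff₀ (by positivity), mul_one] at hk
  exact min_eq_left ((min_lt_iff.1 hk).resolve_right (lt_irrefl _)).le

end Truncation

section Komlos

variable {η : Measure Ω}

/-- The sequence of arithmetic means of `f`. The value at `n = 0` is `0`. -/
def cesaroMean (f : ℕ → Ω → ℝ) (n : ℕ) : Ω → ℝ := fun ω =>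
  (n : ℝ)⁻¹ * ∑ k ∈ Finset.range n, f k ω

/-- The arithmetic means of every subsequence of `f` converge almost everywhere, possibly to limits
depending on the subsequence. -/
def HereditarilyCesaroConvergent (η : Measure Ω) (f : ℕ → Ω → ℝ) : Prop :=
  ∀ τ : ℕ → ℕ, StrictMono τ →
    ∀ᵐ ω ∂η, ∃ L, Tendsto (fun n => cesaroMean (f ∘ τ) n ω) atTop (𝓝 L)

lemma HereditarilyCesaroConvergent.comp_strictMono {f : ℕ → Ω → ℝ}
    (hf : HereditarilyCesaroConvergent η f) {σ : ℕ → ℕ} (hσ : StrictMono σ) :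
    HereditarilyCesaroConvergent η (f ∘ σ) := fun τ hτ => hf (σ ∘ τ) (hσ.comp hτ)

lemma HereditarilyCesaroConvergent.sub {f g : ℕ → Ω → ℝ}
    (hf : HereditarilyCesaroConvergent η f) (hg : HereditarilyCesaroConvergent η g) :
    HereditarilyCesaroConvergent η (f - g) := fun τ hτ => by
  filter_upwards [hf τ hτ, hg τ hτ] with ω ⟨L, hL⟩ ⟨M, hM⟩
  refine ⟨L - M, (hL.sub hM).congr fun n => ?_⟩
  simp [cesaroMean, ← mul_sub]

lemma tendsto_mean_of_tendsto_mean_floor_pow {u : ℕ → ℝ} (hu : ∀ n, 0 ≤ u n) {L : ℝ}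
    (hL : ∀ j : ℕ, Tendsto (fun i : ℕ => (⌊(1 + 1 / ((j : ℝ) + 1)) ^ i⌋₊ : ℝ)⁻¹ *
      ∑ k ∈ Finset.range ⌊(1 + 1 / ((j : ℝ) + 1)) ^ i⌋₊, u k) atTop (𝓝 L)) :
    Tendsto (fun n : ℕ => (n : ℝ)⁻¹ * ∑ k ∈ Finset.range n, u k) atTop (𝓝 L) := by
  simp only [← div_eq_inv_mul] at hL ⊢
  refine tendsto_div_of_monotone_of_tendsto_div_floor_pow (fun n => ∑ k ∈ Finset.range n, u k) L
    (fun m n hmn => Finset.sum_le_sum_of_subset_of_nonneg (Finset.range_mono hmn) fun k _ _ => hu k)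
    (fun j : ℕ => 1 + 1 / ((j : ℝ) + 1)) (fun j => lt_add_of_pos_right 1 (by positivity)) ?_ hL
  simpa using (tendsto_one_div_add_atTop_nhds_zero_nat (𝕜 := ℝ)).const_add 1

lemma ae_exists_tendsto_cesaroMean_of_almostOrthogonal {F : ℕ → Ω → ℝ} {w h : ℕ → Lp ℝ 2 η}
    (hF : ∀ k, 0 ≤ F k) (hw : ∀ k, w k =ᵐ[η] truncAt (F k) k)
    (hws : Summable fun k : ℕ => ‖w k‖ ^ 2 / ((k : ℝ) + 1) ^ 2)
    (hys : Summable fun k : ℕ => ‖w k - h k‖ ^ 2 / ((k : ℝ) + 1) ^ 2)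
    (hy : AlmostOrthogonal fun k => w k - h k)
    (hh : ∀ᵐ ω ∂η, ∃ L, Tendsto (fun k => h k ω) atTop (𝓝 L)) :
    ∀ᵐ ω ∂η, ∃ L, Tendsto (fun n => cesaroMean F n ω) atTop (𝓝 L) := by
  have one_lt : ∀ j : ℕ, (1 : ℝ) < 1 + 1 / ((j : ℝ) + 1) := fun j =>
    lt_add_of_pos_right 1 (by positivity)
  filter_upwards [hh, ae_eventually_truncAt_eq hw hws, ae_all_iff.2 hw,
    ae_all_iff.2 fun k => Lp.coeFn_sub (w k) (h k),
    ae_all_iff.2 fun j => hy.ae_tendsto_mean_floor_pow hys (one_lt j)]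
    with ω ⟨L, h_tendsto⟩ trunc_eq w_eq coe_sub centred_tendsto
  refine ⟨L, tendsto_mean_of_tendsto_mean_floor_pow (fun k => hF k ω) fun j => ?_⟩
  have compensator_tendsto : Tendsto (fun k => F k ω - truncAt (F k) k ω + h k ω) atTop (𝓝 L) :=
    h_tendsto.congr' (trunc_eq.mono fun k hk => by simp only [hk, sub_self, zero_add])
  have floor_tendsto : Tendsto (fun i : ℕ => ⌊(1 + 1 / ((j : ℝ) + 1)) ^ i⌋₊) atTop atTop :=
    tendsto_nat_floor_atTop.comp (tendsto_pow_atTop_atTop_of_one_lt (one_lt j))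
  have sum_tendsto := (centred_tendsto j).add (compensator_tendsto.cesaro.comp floor_tendsto)
  rw [zero_add] at sum_tendsto
  refine sum_tendsto.congr fun i => ?_
  simp only [Function.comp_apply, ← mul_add, ← Finset.sum_add_distrib, coe_sub, Pi.sub_apply, w_eq]
  congr 1
  exact Finset.sum_congr rfl fun k _ => by ring

theorem exists_strictMono_hereditarilyCesaroConvergent_of_nonneg [IsFiniteMeasure η]
    {f : ℕ → Ω → ℝ} (hf : ∀ n, Integrable (f n) η) (h0 : ∀ n, 0 ≤ f n) {C : ℝ}
    (hC : ∀ n, ∫ ω, f n ω ∂η ≤ C) :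
    ∃ σ : ℕ → ℕ, StrictMono σ ∧ HereditarilyCesaroConvergent η (f ∘ σ) := by
  have trunc_memLp : ∀ j n, MemLp (truncAt (f n) j) 2 η := fun j n =>
    memLp_truncAt (hf n).1 (h0 n) j 2
  let x : ℕ → ℕ → Lp ℝ 2 η := fun j n => (trunc_memLp j n).toLp (truncAt (f n) j)
  have x_eq : ∀ j n, x j n =ᵐ[η] truncAt (f n) j := fun j n => (trunc_memLp j n).coeFn_toLp
  have sum_x_le : ∀ n J, ∑ j ∈ Finset.range J, ‖x j n‖ ^ 2 / ((j : ℝ) + 1) ^ 2 ≤ 3 * C :=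
    fun n J => (sum_range_norm_truncAt_sq_div_sq_le (hf n) (h0 n) J).trans (by linarith [hC n])
  have x_mono : ∀ n, Monotone fun j => x j n := fun n i j hij =>
    (Lp.coeFn_le _ _).1 <| by
      filter_upwards [x_eq i n, x_eq j n] with ω hi hj
      rw [hi, hj]
      exact truncAt_mono (f n) hij ω
  have integral_x_le : ∀ j n, ∫ ω, x j n ω ∂η ≤ C := fun j n =>
    (integral_congr_ae (x_eq j n)).trans_le <|
      (integral_mono ((trunc_memLp j n).integrable one_le_two) (hf n) (truncAt_le_self _ j)).trans
        (hC n)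
  have hyperfilter_le : (hyperfilter ℕ : Filter ℕ) ≤ atTop :=
    Nat.cofinite_eq_atTop ▸ hyperfilter_le_cofinite
  choose h hx using fun j => exists_tendstoWeakly_of_norm_le (hyperfilter ℕ) (x := x j)
    fun n => Lp.norm_le_of_ae_bound (j.cast_add_one_pos (α := ℝ)).le <| (x_eq j n).mono fun ω hω =>
      hω ▸ norm_truncAt_le (h0 n) j ω
  obtain ⟨σ, σ_mono, hσ⟩ :=
    exists_strictMono_forall_diagonal_almostOrthogonal hyperfilter_le sum_x_le hx
  refine ⟨σ, σ_mono, fun τ hτ => ?_⟩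
  obtain ⟨w_summable, y_summable, y_orth⟩ := hσ τ hτ
  exact ae_exists_tendsto_cesaroMean_of_almostOrthogonal (fun k => h0 (σ (τ k)))
    (fun k => x_eq k (σ (τ k))) w_summable y_summable y_orth
    (TendstoWeakly.ae_exists_tendsto_of_monotone hx x_mono integral_x_le)

theorem exists_strictMono_hereditarilyCesaroConvergent [IsFiniteMeasure η] {f : ℕ → Ω → ℝ}
    (hf : ∀ n, Integrable (f n) η) {C : ℝ} (hC : ∀ n, ∫ ω, |f n ω| ∂η ≤ C) :
    ∃ σ : ℕ → ℕ, StrictMono σ ∧ HereditarilyCesaroConvergent η (f ∘ σ) := by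
  obtain ⟨σ, hσ, pos_conv⟩ := exists_strictMono_hereditarilyCesaroConvergent_of_nonneg
    (f := fun n => (f n)⁺) (fun n => (hf n).pos_part) (fun n => posPart_nonneg (f n))
    fun n => (integral_mono (hf n).pos_part (hf n).abs fun _ =>
      sup_le (le_abs_self _) (abs_nonneg _)).trans (hC n)
  obtain ⟨ρ, hρ, neg_conv⟩ := exists_strictMono_hereditarilyCesaroConvergent_of_nonneg
    (f := fun n => (f (σ n))⁻) (fun n => (hf _).neg_part) (fun n => negPart_nonneg (f (σ n)))
    fun n => (integral_mono (hf _).neg_part (hf _).abs fun _ =>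
      sup_le (neg_le_abs _) (abs_nonneg _)).trans (hC (σ n))
  refine ⟨σ ∘ ρ, hσ.comp hρ, ?_⟩
  convert (pos_conv.comp_strictMono hρ).sub neg_conv using 1
  ext n : 1
  exact (posPart_sub_negPart (f (σ (ρ n)))).symm

end Komlos

section WeaklyNull

variable {η : Measure Ω}

/-- Weak convergence to `0` of a sequence in `L¹(η)`, with the dual represented by `L^∞(η)`. -/
structure WeaklyNullL1 (η : Measure Ω) (g : ℕ → Ω → ℝ) : Prop where
  integrable : ∀ n, Integrable (g n) η
  tendsto_integral_mul : ∀ φ : Ω → ℝ, MemLp φ ∞ η →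
    Tendsto (fun n => ∫ ω, g n ω * φ ω ∂η) atTop (𝓝 0)

lemma exists_measurable_bounded_ae_eq_of_memLp_top {φ : Ω → ℝ} (hφ : MemLp φ ∞ η) :
    ∃ ψ : Ω → ℝ, Measurable ψ ∧ (∃ K : ℝ, ∀ ω, |ψ ω| ≤ K) ∧ ψ =ᵐ[η] φ := by
  set K := lpNorm φ ∞ η
  have K_nonneg : 0 ≤ K := lpNorm_nonneg
  refine ⟨fun ω => max (-K) (min K (hφ.1.mk φ ω)), ?_, ⟨K, fun ω => abs_le.2 ?_⟩, ?_⟩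
  · exact measurable_const.max (measurable_const.min hφ.1.stronglyMeasurable_mk.measurable)
  · exact ⟨le_max_left _ _, max_le (neg_le_self K_nonneg) (min_le_left _ _)⟩
  · filter_upwards [hφ.1.ae_eq_mk, ae_le_lpNorm_exponent_top hφ] with ω mk_eq norm_le
    rw [← mk_eq, min_eq_right (abs_le.1 norm_le).2, max_eq_right (abs_le.1 norm_le).1]

lemma weaklyNullL1_of_forall_measurable_bounded {g : ℕ → Ω → ℝ} (hg : ∀ n, Integrable (g n) η)
    (hwn : ∀ φ : Ω → ℝ, Measurable φ → (∃ C : ℝ, ∀ ω, |φ ω| ≤ C) →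
      Tendsto (fun n => ∫ ω, g n ω * φ ω ∂η) atTop (𝓝 0)) :
    WeaklyNullL1 η g where
  integrable := hg
  tendsto_integral_mul φ hφ := by
    obtain ⟨ψ, ψ_measurable, ψ_bounded, ψ_eq⟩ := exists_measurable_bounded_ae_eq_of_memLp_top hφ
    exact (hwn ψ ψ_measurable ψ_bounded).congr fun n =>
      integral_congr_ae (ψ_eq.mono fun ω hω => by simp only [hω])

lemma integral_abs_le_norm_lpPairing (f : Lp ℝ 1 η) :
    ∫ ω, |f ω| ∂η ≤ ‖(ContinuousLinearMap.mul ℝ ℝ).lpPairing η 1 ∞ f‖ := by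
  let s : Ω → ℝ := fun ω => f ω / |f ω|
  have s_bound : ∀ᵐ ω ∂η, ‖s ω‖ ≤ 1 := ae_of_all _ fun ω => by
    rw [Real.norm_eq_abs, abs_div, abs_abs]
    exact div_self_le_one _
  have s_memLp : MemLp s ∞ η := by
    have f_aemeasurable := (Lp.aestronglyMeasurable f).aemeasurable
    exact memLp_top_of_bound (f_aemeasurable.div f_aemeasurable.abs).aestronglyMeasurable 1 s_bound
  have norm_s_le : ‖s_memLp.toLp s‖ ≤ 1 := by
    rw [Lp.norm_toLp, eLpNorm_exponent_top]
    exact ENNReal.toReal_le_of_le_ofReal zero_le_one (eLpNormEssSup_le_of_ae_bound s_bound)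
  have pairing_eq : (ContinuousLinearMap.mul ℝ ℝ).lpPairing η 1 ∞ f (s_memLp.toLp s) =
      ∫ ω, |f ω| ∂η := by
    rw [ContinuousLinearMap.lpPairing_eq_integral]
    refine integral_congr_ae (s_memLp.coeFn_toLp.mono fun ω hω => ?_)
    simp only [ContinuousLinearMap.mul_apply', hω, s]
    rw [mul_div_assoc', ← abs_mul_abs_self, mul_self_div_self]
  rw [← pairing_eq]
  exact (Real.le_norm_self _).trans (ContinuousLinearMap.unit_le_opNorm _ _ norm_s_le)

namespace WeaklyNullL1

variable {g : ℕ → Ω → ℝ}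

lemma comp_strictMono (hg : WeaklyNullL1 η g) {σ : ℕ → ℕ} (hσ : StrictMono σ) :
    WeaklyNullL1 η (g ∘ σ) where
  integrable n := hg.integrable (σ n)
  tendsto_integral_mul φ hφ := (hg.tendsto_integral_mul φ hφ).comp hσ.tendsto_atTop

lemma cesaroMean (hg : WeaklyNullL1 η g) : WeaklyNullL1 η (cesaroMean g) where
  integrable n := (integrable_finsetSum _ fun k _ => hg.integrable k).const_mul _
  tendsto_integral_mul φ hφ := by
    have mul_integrable : ∀ k, Integrable (fun ω => g k ω * φ ω) η := fun k =>
      (hg.integrable k).mul_of_top_left hφ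
    refine (hg.tendsto_integral_mul φ hφ).cesaro.congr fun n => ?_
    rw [← integral_finsetSum _ fun k _ => mul_integrable k, ← integral_const_mul]
    simp only [Paper.cesaroMean, ← Finset.sum_mul, mul_assoc]

lemma exists_integral_abs_le (hg : WeaklyNullL1 η g) : ∃ C : ℝ, ∀ n, ∫ ω, |g n ω| ∂η ≤ C := by
  let G : ℕ → Lp ℝ 1 η := fun n => (hg.integrable n).toL1 (g n)
  have G_eq : ∀ n, G n =ᵐ[η] g n := fun n => (hg.integrable n).coeFn_toL1
  have pairing_bounded : ∀ φ : Lp ℝ ∞ η, ∃ R, ∀ n,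
      ‖(ContinuousLinearMap.mul ℝ ℝ).lpPairing η 1 ∞ (G n) φ‖ ≤ R := fun φ => by
    obtain ⟨R, hR⟩ := (hg.tendsto_integral_mul φ (Lp.memLp φ)).norm.bddAbove_range
    refine ⟨R, fun n => ?_⟩
    rw [ContinuousLinearMap.lpPairing_eq_integral, integral_congr_ae
      ((G_eq n).mono fun ω hω => by rw [ContinuousLinearMap.mul_apply', hω])]
    exact hR ⟨n, rfl⟩
  obtain ⟨C, hC⟩ := banach_steinhaus pairing_bounded
  refine ⟨C, fun n => ?_⟩
  calc ∫ ω, |g n ω| ∂η = ∫ ω, |G n ω| ∂η :=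
        integral_congr_ae ((G_eq n).mono fun ω hω => by simp only [hω])
    _ ≤ ‖(ContinuousLinearMap.mul ℝ ℝ).lpPairing η 1 ∞ (G n)‖ := integral_abs_le_norm_lpPairing _
    _ ≤ C := hC n

lemma restrict (hg : WeaklyNullL1 η g) {A : Set Ω} (hA : MeasurableSet A) :
    WeaklyNullL1 (η.restrict A) g where
  integrable n := (hg.integrable n).restrict
  tendsto_integral_mul φ hφ := by
    refine (hg.tendsto_integral_mul _ ((memLp_indicator_iff_restrict hA).2 hφ)).congr fun n => ?_
    rw [← integral_indicator hA]
    simp only [Set.indicator_mul_right]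

lemma ae_eq_zero_of_bounded [IsFiniteMeasure η] (hg : WeaklyNullL1 η g) {K : ℝ}
    (hK : ∀ n, ∀ᵐ ω ∂η, |g n ω| ≤ K) {L : Ω → ℝ}
    (hL : ∀ᵐ ω ∂η, Tendsto (fun n => g n ω) atTop (𝓝 (L ω))) : L =ᵐ[η] 0 := by
  have L_integrable : Integrable L η := by
    refine Integrable.of_bound (aestronglyMeasurable_of_tendsto_ae atTop
      (fun n => (hg.integrable n).1) hL) K ?_
    filter_upwards [hL, ae_all_iff.2 hK] with ω L_tendsto g_le
    exact le_of_tendsto' L_tendsto.norm g_le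
  refine L_integrable.ae_eq_zero_of_forall_setIntegral_eq_zero fun A hA _ => ?_
  have tendsto_zero : Tendsto (fun n => ∫ ω in A, g n ω ∂η) atTop (𝓝 0) := by
    simpa using (hg.restrict hA).tendsto_integral_mul (fun _ => 1) (memLp_top_const 1)
  have tendsto_L : Tendsto (fun n => ∫ ω in A, g n ω ∂η) atTop (𝓝 (∫ ω in A, L ω ∂η)) :=
    tendsto_integral_of_dominated_convergence (fun _ => K) (fun n => (hg.integrable n).1.restrict)
      (integrable_const K) (fun n => ae_restrict_of_ae (hK n)) (ae_restrict_of_ae hL)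
  exact tendsto_nhds_unique tendsto_L tendsto_zero

theorem ae_tendsto_zero [IsFiniteMeasure η] (hg : WeaklyNullL1 η g)
    (hconv : ∀ᵐ ω ∂η, ∃ L, Tendsto (fun n => g n ω) atTop (𝓝 L)) :
    ∀ᵐ ω ∂η, Tendsto (fun n => g n ω) atTop (𝓝 0) := by
  obtain ⟨L, -, hL⟩ := measurable_limit_of_tendsto_metrizable_ae
    (fun n => (hg.integrable n).aemeasurable) hconv
  have eq_zero_of_bounded : ∀ K : ℕ, ∀ᵐ ω ∂η, (∀ n, |g n ω| ≤ K) → L ω = 0 := fun K => by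
    have bounded_null : NullMeasurableSet {ω | ∀ n, |g n ω| ≤ K} η := by
      simp only [Set.ofPred_forall]
      exact .iInter fun n => nullMeasurableSet_le (hg.integrable n).abs.aemeasurable
        aemeasurable_const
    obtain ⟨A, A_subset, hA, A_eq⟩ := bounded_null.exists_measurable_subset_ae_eq
    have L_eq_zero : L =ᵐ[η.restrict A] 0 := (hg.restrict hA).ae_eq_zero_of_bounded
      (fun n => ae_restrict_of_forall_mem hA fun ω hω => A_subset hω n) (ae_restrict_of_ae hL)
    filter_upwards [(ae_restrict_iff' hA).1 L_eq_zero, A_eq.mem_iff] with ω h mem_iff hω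
    exact h (mem_iff.2 hω)
  filter_upwards [hL, ae_all_iff.2 eq_zero_of_bounded] with ω L_tendsto h_zero
  obtain ⟨R, hR⟩ := L_tendsto.abs.bddAbove_range
  obtain ⟨K, hK⟩ := exists_nat_ge R
  rwa [h_zero K fun n => (hR ⟨n, rfl⟩).trans hK] at L_tendsto

end WeaklyNullL1

end WeaklyNull

/-- Komlós-type: every weakly null sequence in `L¹(η)` has a subsequence all
of whose further subsequences have arithmetic means converging to `0` a.e. -/
theorem statement12
    {Ω : Type*} [MeasurableSpace Ω] (η : Measure Ω) [IsFiniteMeasure η]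
    (g : ℕ → Ω → ℝ) (hg : ∀ n, Integrable (g n) η)
    (hwn : ∀ φ : Ω → ℝ, Measurable φ → (∃ C : ℝ, ∀ ω, |φ ω| ≤ C) →
      Tendsto (fun n => ∫ ω, g n ω * φ ω ∂η) atTop (nhds 0)) :
    ∃ σ : ℕ → ℕ, StrictMono σ ∧
      ∀ τ : ℕ → ℕ, StrictMono τ →
        ∀ᵐ ω ∂η, Tendsto
          (fun n : ℕ => (n : ℝ)⁻¹ * ∑ k ∈ Finset.range n, g (σ (τ k)) ω)
          atTop (nhds 0) := by
  have g_weaklyNull := weaklyNullL1_of_forall_measurable_bounded hg hwn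
  obtain ⟨C, hC⟩ := g_weaklyNull.exists_integral_abs_le
  obtain ⟨σ, hσ, σ_convergent⟩ := exists_strictMono_hereditarilyCesaroConvergent hg hC
  exact ⟨σ, hσ, fun τ hτ =>
    ((g_weaklyNull.comp_strictMono hσ).comp_strictMono hτ).cesaroMean.ae_tendsto_zero
      (σ_convergent τ hτ)⟩

end Paper
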